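/- Let φ : ℝ → ℝ be differentiable with φ′ ≥ 0 and φ′(s) ≤ C₀ for all s, for some constant C₀ ≥ 1. Fix 0 < ν ≤ 1, b ∈ ℝ, t ∈ ℝ, and define for nonzero integer k and real ξ: 𝓜(k,ξ) = 1 + φ(ν^{1/3}|k|^{−1/3}sgn(k)ξ) + (1/k²)(arctan(ξ/k) + π/2), assume additionally 0 ≤ φ ≤ 1, and set 𝓜_t^b(k,ξ) = √(𝓜(k,ξ)) · (1 + k² + (ξ + kt)²)^{b/2}. Then there is a constant C depending only on C₀ and b such that for every nonzero integer k and all ξ ∈ ℝ, |∂_ξ 𝓜_t^b(k,ξ)| ≤ C · ( ν^{1/3}·|k|^{−1/3} + 1/|k| ) · (1 + k² + (ξ + kt)²)^{b/2}. -/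

import Mathlib

theorem aux18 (C₀ b : ℝ) (hC₀ : 1 ≤ C₀) (φ : ℝ → ℝ) (hd : Differentiable ℝ φ)
    (h0 : ∀ s : ℝ, 0 ≤ deriv φ s) (h1 : ∀ s : ℝ, deriv φ s ≤ C₀) (hp : ∀ s : ℝ, 0 ≤ φ s)
    (hp1 : ∀ s : ℝ, φ s ≤ 1) (a s k t ξ : ℝ) (ha : 0 ≤ a) (hs : |s| = 1) (hk : 1 ≤ |k|) :
    |deriv (fun ξ' : ℝ =>
        Real.sqrt (1 + φ (a * s * ξ') + (1 / k ^ 2) * (Real.arctan (ξ' / k) + Real.pi / 2)) *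
          (1 + k ^ 2 + (ξ' + k * t) ^ 2) ^ (b / 2)) ξ|
      ≤ (C₀ + 3 * |b| + 1) * (a + 1 / |k|) * (1 + k ^ 2 + (ξ + k * t) ^ 2) ^ (b / 2) := by
  have hkpos : 0 < |k| := by linarith
  have hk2 : 1 ≤ k ^ 2 := by rw [← sq_abs]; nlinarith
  have hinv : 1 / k ^ 2 ≤ 1 := by rw [div_le_one (by linarith)]; exact hk2
  have hinv0 : 0 ≤ 1 / k ^ 2 := by positivity
  have harc1 := Real.neg_pi_div_two_lt_arctan (ξ / k)
  have harc2 := Real.arctan_lt_pi_div_two (ξ / k)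
  set M := 1 + φ (a * s * ξ) + (1 / k ^ 2) * (Real.arctan (ξ / k) + Real.pi / 2) with hM
  have hM1 : 1 ≤ M := by
    have := mul_nonneg hinv0 (by linarith : 0 ≤ Real.arctan (ξ / k) + Real.pi / 2)
    have := hp (a * s * ξ)
    linarith
  have hM9 : M ≤ 9 := by
    have := mul_le_mul_of_nonneg_right hinv
      (by linarith : 0 ≤ Real.arctan (ξ / k) + Real.pi / 2)
    have := hp1 (a * s * ξ)
    have := Real.pi_lt_four
    linarith
  have hsq1 : 1 ≤ Real.sqrt M := Real.one_le_sqrt.mpr hM1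
  have hsq3 : Real.sqrt M ≤ 3 := Real.sqrt_le_iff.mpr ⟨by norm_num, by linarith⟩
  set L := 1 + k ^ 2 + (ξ + k * t) ^ 2 with hL
  have hLpos : 0 < L := by positivity
  have hφ : HasDerivAt (fun x : ℝ => φ (a * s * x)) (deriv φ (a * s * ξ) * (a * s)) ξ := by
    have h := ((hasDerivAt_id ξ).const_mul (a * s))
    have h2 := (hd (a * s * ξ)).hasDerivAt
    rw [mul_one] at h
    exact HasDerivAt.comp (h₂ := φ) (h := fun x : ℝ => a * s * x) ξ h2 h
  have hat := (((hasDerivAt_id ξ).div_const k).arctan.add_const (Real.pi / 2)).const_mul (1 / k ^ 2)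
  have hMd := (((hφ.const_add 1).add hat).sqrt (by simp only [id, Pi.add_apply]; rw [← hM]; linarith))
  have hLd : HasDerivAt (fun x : ℝ => 1 + k ^ 2 + (x + k * t) ^ 2) (2 * (ξ + k * t)) ξ := by
    simpa using (((hasDerivAt_id ξ).add_const (k * t)).pow 2).const_add (1 + k ^ 2)
  have hLp := hLd.rpow_const (p := b / 2) (Or.inl hLpos.ne')
  have key := (hMd.mul hLp).deriv
  simp only [id, Pi.add_apply] at key
  rw [← hM, ← hL] at key
  refine (congrArg abs key).trans_le ?_
  rw [Real.rpow_sub_one hLpos.ne']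
  set P := L ^ (b / 2) with hP
  have hPpos : 0 < P := Real.rpow_pos_of_pos hLpos _
  set D := deriv φ (a * s * ξ) * (a * s) + 1 / k ^ 2 * (1 / (1 + (ξ / k) ^ 2) * (1 / k)) with hD
  have hDb : |D| ≤ C₀ * a + 1 / |k| := by
    refine (abs_add_le _ _).trans (add_le_add ?_ ?_)
    · rw [abs_mul, abs_mul, hs, abs_of_nonneg (h0 _), abs_of_nonneg ha, mul_one]
      exact mul_le_mul_of_nonneg_right (h1 _) ha
    · rw [abs_mul, abs_mul, abs_of_nonneg hinv0, abs_div 1 k, abs_one,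
        abs_of_nonneg (by positivity : 0 ≤ 1 / (1 + (ξ / k) ^ 2)), ← mul_assoc]
      have h2 : 1 / (1 + (ξ / k) ^ 2) ≤ 1 := by
        rw [div_le_one (by positivity)]; nlinarith [sq_nonneg (ξ / k)]
      have h3 : 1 / k ^ 2 * (1 / (1 + (ξ / k) ^ 2)) ≤ 1 :=
        mul_le_one₀ hinv (by positivity) h2
      exact mul_le_of_le_one_left (by positivity) h3
  have hA : |D / (2 * Real.sqrt M)| ≤ C₀ * a + 1 / |k| := by
    rw [abs_div, abs_of_pos (by positivity : 0 < 2 * Real.sqrt M)]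
    exact (div_le_self (abs_nonneg _) (by linarith)).trans hDb
  have hy : |ξ + k * t| / L ≤ 1 / |k| := by
    rw [div_le_div_iff₀ hLpos hkpos, hL, ← sq_abs k, ← sq_abs (ξ + k * t)]
    nlinarith [sq_nonneg (|ξ + k * t| - |k|), sq_nonneg (|ξ + k * t|), sq_nonneg (|k|)]
  have hB : |Real.sqrt M * (2 * (ξ + k * t) * (b / 2) * (P / L))| ≤ 3 * (|b| * (1 / |k|)) * P := by
    have : Real.sqrt M * (2 * (ξ + k * t) * (b / 2) * (P / L))
        = Real.sqrt M * (b * ((ξ + k * t) / L)) * P := by ring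
    rw [this, abs_mul, abs_mul, abs_mul, abs_div, abs_of_pos hLpos, abs_of_pos hPpos,
      abs_of_nonneg (Real.sqrt_nonneg M)]
    gcongr
  refine (abs_add_le _ _).trans ?_
  rw [abs_mul (D / (2 * Real.sqrt M)), abs_of_pos hPpos]
  have hA' := mul_le_mul_of_nonneg_right hA hPpos.le
  refine (add_le_add hA' hB).trans ?_
  rw [← add_mul]
  refine mul_le_mul_of_nonneg_right ?_ hPpos.le
  have hi : 0 ≤ 1 / |k| := by positivity
  nlinarith [mul_nonneg (abs_nonneg b) ha, mul_nonneg (abs_nonneg b) hi,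
    mul_nonneg (by linarith : 0 ≤ C₀) hi]

/-- Estimate (4.9): for the combined multiplier `𝓜_t^b(k,ξ) = √𝓜(k,ξ)·Λ_t^b(k,ξ)` with
`𝓜 = 1 + 𝓜₁ + 𝓜₂`, there is a constant `C` depending only on `C₀` and `b` such that for
every nonzero integer `k` and every `ξ`,
`|∂_ξ𝓜_t^b(k,ξ)| ≤ C(ν^{1/3}|k|^{−1/3} + 1/|k|)Λ_t^b(k,ξ)`. -/
theorem stmt18 (C₀ b : ℝ) (hC₀ : 1 ≤ C₀) :
    ∃ C : ℝ, 0 < C ∧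
      ∀ φ : ℝ → ℝ, Differentiable ℝ φ → (∀ s : ℝ, 0 ≤ deriv φ s) →
        (∀ s : ℝ, deriv φ s ≤ C₀) → (∀ s : ℝ, 0 ≤ φ s) → (∀ s : ℝ, φ s ≤ 1) →
      ∀ ν : ℝ, 0 < ν → ν ≤ 1 → ∀ t : ℝ, ∀ k : ℤ, k ≠ 0 → ∀ ξ : ℝ,
        |deriv (fun ξ' : ℝ =>
            Real.sqrt (1 + φ (ν ^ ((1 : ℝ) / 3) * |(k : ℝ)| ^ (-(1 : ℝ) / 3) * (k.sign : ℝ) * ξ')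
                + (1 / (k : ℝ) ^ 2) * (Real.arctan (ξ' / (k : ℝ)) + Real.pi / 2)) *
              (1 + (k : ℝ) ^ 2 + (ξ' + (k : ℝ) * t) ^ 2) ^ (b / 2)) ξ|
          ≤ C * (ν ^ ((1 : ℝ) / 3) * |(k : ℝ)| ^ (-(1 : ℝ) / 3) + 1 / |(k : ℝ)|) *
              (1 + (k : ℝ) ^ 2 + (ξ + (k : ℝ) * t) ^ 2) ^ (b / 2) := by
  refine ⟨C₀ + 3 * |b| + 1, by positivity, ?_⟩
  intro φ hd h0 h1 hp hp1 ν hν _ t k hk ξ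
  refine aux18 C₀ b hC₀ φ hd h0 h1 hp hp1 _ _ k t ξ (by positivity) ?_ ?_
  · rcases lt_or_gt_of_ne hk with h | h
    · simp [Int.sign_eq_neg_one_of_neg h]
    · simp [Int.sign_eq_one_of_pos h]
  · exact_mod_cast Int.one_le_abs hk
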